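/- Let m₁, m₂ be integers with m₁² + m₂² > 0, and let α, γ be real numbers such that α, γ, and γ − α are not integers. Write (x)₊ = max(0, x). Then there exists a polynomial P(t) of degree at most max(|m₁|, |m₂ − m₁|) − 1 such that for all real t: ( (1−α)_{m₁} t^{(m₂)₊} / (2−γ)_{m₂} ) · ₁F₁(α; γ; t) · ₁F₁(1−α+m₁; 2−γ+m₂; −t) − (1−γ)_{m₂} (γ−α)_{m₁−m₂} t^{(−m₂)₊} · ₁F₁(1−α; 2−γ; −t) · ₁F₁(α−m₁; γ−m₂; t) = P(t). -/

import Mathlib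

open Finset

/-- Pochhammer symbol `(a)ₙ = a(a+1)⋯(a+n-1)` for natural `n`. -/
noncomputable def poch (a : ℝ) (n : ℕ) : ℝ := Polynomial.eval a (ascPochhammer ℝ n)

/-- Pochhammer symbol `(a)ₖ` for integer `k`: for `k ≥ 0` the ascending product,
and `(a)₋ₖ = (-1)ᵏ/(1-a)ₖ` for `k ≥ 0`. -/
noncomputable def pochZ (a : ℝ) (k : ℤ) : ℝ :=
  if 0 ≤ k then poch a k.toNat else (-1) ^ (-k).toNat / poch (1 - a) (-k).toNat

/-- The (generally non-terminating) Clausen series `₃F₂(a,b,c;d,e;1)`. -/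
noncomputable def F32 (a b c d e : ℝ) : ℝ :=
  ∑' n : ℕ, poch a n * poch b n * poch c n / (poch d n * poch e n * n.factorial)

/-- A terminating `₃F₂(a,b,c;d,e;1)` summed over `k = 0, …, N`. -/
noncomputable def F32sum (N : ℕ) (a b c d e : ℝ) : ℝ :=
  ∑ k ∈ Finset.range (N + 1),
    poch a k * poch b k * poch c k / (poch d k * poch e k * k.factorial)

/-- The Kummer confluent hypergeometric function `₁F₁(a;b;x)`. -/
noncomputable def F11 (a b x : ℝ) : ℝ :=
  ∑' n : ℕ, poch a n * x ^ n / (poch b n * n.factorial)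


/-- `a` is not an integer. -/
def NonInt (a : ℝ) : Prop := ∀ k : ℤ, a ≠ (k : ℝ)

lemma NonInt.add_int {a : ℝ} (h : NonInt a) (m : ℤ) : NonInt (a + m) := by
  intro k hk
  exact h (k - m) (by push_cast; linarith)

lemma NonInt.sub_int {a : ℝ} (h : NonInt a) (m : ℤ) : NonInt (a - m) := by
  intro k hk
  exact h (k + m) (by push_cast; linarith)

lemma NonInt.int_sub {a : ℝ} (h : NonInt a) (m : ℤ) : NonInt (m - a) := by
  intro k hk
  exact h (m - k) (by push_cast; linarith)

lemma NonInt.gamma_ne {a : ℝ} (h : NonInt a) : Real.Gamma a ≠ 0 :=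
  Real.Gamma_ne_zero (fun m hm => h (-(m : ℤ)) (by push_cast; exact hm))

lemma poch_zero (a : ℝ) : poch a 0 = 1 := by simp [poch]

lemma poch_succ (a : ℝ) (n : ℕ) : poch a (n + 1) = poch a n * (a + n) := by
  simp [poch, ascPochhammer_succ_eval]

lemma poch_eq_prod (a : ℝ) (n : ℕ) : poch a n = ∏ i ∈ range n, (a + i) := by
  induction n with
  | zero => simp [poch_zero]
  | succ n ih => rw [poch_succ, prod_range_succ, ih]

lemma poch_add (a : ℝ) (m n : ℕ) : poch a (m + n) = poch a m * poch (a + m) n := by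
  rw [poch_eq_prod, poch_eq_prod, poch_eq_prod, prod_range_add]
  simp [add_assoc]

lemma poch_succ_left (a : ℝ) (n : ℕ) : poch a (n + 1) = a * poch (a + 1) n := by
  rw [add_comm, poch_add]
  simp [poch_succ, poch_zero]

lemma poch_neg (a : ℝ) (n : ℕ) : poch (1 - a - n) n = (-1) ^ n * poch a n := by
  have hc : ((-1 : ℝ)) ^ n = ∏ _i ∈ range n, (-1 : ℝ) := by simp
  rw [poch_eq_prod, poch_eq_prod, ← prod_range_reflect, hc, ← prod_mul_distrib]
  apply prod_congr rfl
  intro i hi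
  have : i + 1 ≤ n := by simpa using hi
  rw [show n - 1 - i = n - (i + 1) by omega, Nat.cast_sub this]
  push_cast
  ring

lemma poch_ne_zero {a : ℝ} (h : NonInt a) (n : ℕ) : poch a n ≠ 0 := by
  rw [poch_eq_prod, prod_ne_zero_iff]
  intro i _ hi
  exact h (-(i : ℤ)) (by push_cast; linarith)

lemma poch_gamma {a : ℝ} (h : NonInt a) (n : ℕ) :
    poch a n * Real.Gamma a = Real.Gamma (a + n) := by
  induction n with
  | zero => simp [poch_zero]
  | succ n ih =>
    rw [poch_succ]
    have : a + n ≠ 0 := fun hi => h (-(n : ℤ)) (by push_cast; linarith)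
    push_cast
    rw [← add_assoc, Real.Gamma_add_one this, ← ih]
    ring

lemma pochZ_nat (a : ℝ) (n : ℕ) : pochZ a (n : ℤ) = poch a n := by
  simp [pochZ]

lemma pochZ_neg (a : ℝ) (n : ℕ) : pochZ a (-(n : ℤ)) = (-1) ^ n / poch (1 - a) n := by
  unfold pochZ
  split_ifs with h
  · have : n = 0 := by omega
    subst this
    simp [poch_zero]
  · simp

lemma pochZ_gamma {a : ℝ} (h : NonInt a) (k : ℤ) :
    pochZ a k * Real.Gamma a = Real.Gamma (a + k) := by
  obtain ⟨n, rfl | rfl⟩ := k.eq_nat_or_neg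
  · rw [pochZ_nat]; simpa using poch_gamma h n
  · rw [pochZ_neg]
    have h1 : NonInt (a - n) := by simpa using h.sub_int n
    have h2 : NonInt (1 - a) := by simpa using h.int_sub 1
    have := poch_gamma h1 n
    have h3 := poch_neg (1 - a) n
    have h4 := poch_ne_zero h2 n
    rw [show 1 - (1 - a) - (n : ℝ) = a - n by ring] at h3
    rw [sub_add_cancel, h3] at this
    rw [← this]
    push_cast
    have h5 : ((-1 : ℝ) ^ n) * (-1) ^ n = 1 := by rw [← mul_pow]; simp
    rw [← sub_eq_add_neg]
    field_simp
    linear_combination (Real.Gamma (a - n)) * h5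

lemma pochZ_ne_zero {a : ℝ} (h : NonInt a) (k : ℤ) : pochZ a k ≠ 0 := by
  intro h0
  have := pochZ_gamma h k
  rw [h0, zero_mul] at this
  exact (h.add_int k).gamma_ne this.symm

/-- Splitting: `(a-k)_{k+m+l} = (-1)^k (1-a)_k (a)_m (a+m)_l`. -/
lemma poch_split {a : ℝ} (h : NonInt a) (k l K : ℕ) (m : ℤ) (hK : (K : ℤ) = k + m + l) :
    poch (a - k) K = (-1) ^ k * poch (1 - a) k * pochZ a m * poch (a + m) l := by
  have h1 : NonInt (a - k) := by simpa using h.sub_int k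
  have e1 := poch_gamma h1 K
  have e2 := poch_gamma h1 k
  have e3 := pochZ_gamma h m
  have e4 := poch_gamma (h.add_int m) l
  have e5 := poch_neg (1 - a) k
  rw [show 1 - (1 - a) - (k : ℝ) = a - k by ring] at e5
  rw [← e5]
  have hK' : (K : ℝ) = k + m + l := by exact_mod_cast hK
  rw [show a - k + K = a + m + l by rw [hK']; ring, ← e4, ← e3] at e1
  rw [sub_add_cancel] at e2
  rw [← e2] at e1
  have := h1.gamma_ne
  apply mul_right_cancel₀ this
  rw [e1]; ring

lemma pochZ_refl {a : ℝ} (h : NonInt a) (m : ℤ) :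
    pochZ a m * pochZ (1 - a) (-m) = (-1 : ℝ) ^ m := by
  have h2 : NonInt (1 - a) := by simpa using h.int_sub 1
  obtain ⟨n, rfl | rfl⟩ := m.eq_nat_or_neg
  · rw [pochZ_nat, pochZ_neg, sub_sub_cancel]
    have := poch_ne_zero h n
    field_simp
    simp
  · rw [neg_neg, pochZ_nat, pochZ_neg]
    have := poch_ne_zero h2 n
    have h5 : ((-1 : ℝ) ^ n) * (-1) ^ n = 1 := by rw [← mul_pow]; simp
    field_simp
    rw [zpow_neg, zpow_natCast]
    exact eq_inv_of_mul_eq_one_left h5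

lemma vander (n : ℕ) : ∀ a b : ℝ,
    ∑ k ∈ range (n + 1), (n.choose k : ℝ) * ((-1) ^ k * poch a k * poch (b + k) (n - k))
      = poch (b - a) n := by
  induction n with
  | zero => intro a b; simp [poch_zero]
  | succ n ih =>
    intro a b
    have key := Finset.sum_choose_succ_mul (R := ℝ)
      (fun k j => (-1) ^ k * poch a k * poch (b + k) j) n
    rw [show n + 1 + 1 = n + 2 by rfl, key]
    have e1 : ∑ i ∈ range (n + 1), (n.choose i : ℝ) *
        ((-1) ^ i * poch a i * poch (b + i) (n + 1 - i)) = (b + n) * poch (b - a) n := by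
      rw [← ih a b, mul_sum]
      apply sum_congr rfl
      intro i hi
      have hi' : i ≤ n := by simpa [Nat.lt_succ_iff] using hi
      rw [show n + 1 - i = (n - i) + 1 by omega, poch_succ, Nat.cast_sub hi']
      ring
    have e2 : ∑ i ∈ range (n + 1), (n.choose i : ℝ) *
        ((-1) ^ (i + 1) * poch a (i + 1) * poch (b + (i + 1 : ℕ)) (n - i))
          = - a * poch (b - a) n := by
      have := ih (a + 1) (b + 1)
      rw [show b + 1 - (a + 1) = b - a by ring] at this
      rw [← this, mul_sum]
      apply sum_congr rfl
      intro i hi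
      rw [poch_succ_left]
      push_cast
      rw [show b + 1 + (i : ℝ) = b + (i + 1) by ring]
      ring
    rw [e1, e2, poch_succ]
    ring

lemma prod_erase_range (k l : ℕ) :
    ∏ i ∈ (range (k + l + 1)).erase k, ((k : ℝ) - i) = (-1) ^ l * k.factorial * l.factorial := by
  induction l with
  | zero =>
    have : (range (k + 0 + 1)).erase k = range k := by
      ext i; simp; omega
    rw [this, ← prod_range_reflect]
    have h : ∀ i ∈ range k, (k : ℝ) - ((k - 1 - i : ℕ) : ℝ) = ((i + 1 : ℕ) : ℝ) := by
      intro i hi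
      have : i + 1 ≤ k := by simpa using hi
      rw [show k - 1 - i = k - (i + 1) by omega, Nat.cast_sub this]
      ring
    rw [prod_congr rfl h, ← Nat.cast_prod, prod_range_add_one_eq_factorial]
    simp
  | succ l ih =>
    have : (range (k + (l + 1) + 1)).erase k = insert (k + l + 1) ((range (k + l + 1)).erase k) := by
      ext i; simp; omega
    rw [this, prod_insert (by simp), ih, Nat.factorial_succ]
    push_cast
    ring


/-- Coefficients of `₁F₁`. -/
noncomputable def cf (a b : ℝ) (n : ℕ) : ℝ := poch a n / (poch b n * n.factorial)

/-- A coefficient sequence with infinite radius of convergence. -/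
def Ent (u : ℕ → ℝ) : Prop := ∀ x : ℝ, Summable fun n => ‖u n * x ^ n‖

/-- Its sum. -/
noncomputable def evS (u : ℕ → ℝ) (x : ℝ) : ℝ := ∑' n, u n * x ^ n

/-- Cauchy product. -/
noncomputable def conv (u v : ℕ → ℝ) (n : ℕ) : ℝ := ∑ kl ∈ antidiagonal n, u kl.1 * v kl.2

/-- Multiplication by `t ^ M`. -/
noncomputable def shiftS (M : ℕ) (u : ℕ → ℝ) (n : ℕ) : ℝ := if M ≤ n then u (n - M) else 0

/-- Substitution `t ↦ -t`. -/
noncomputable def altS (u : ℕ → ℝ) (n : ℕ) : ℝ := (-1) ^ n * u n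

lemma conv_term (u v : ℕ → ℝ) (x : ℝ) (n : ℕ) :
    ∑ kl ∈ antidiagonal n, (u kl.1 * x ^ kl.1) * (v kl.2 * x ^ kl.2) = conv u v n * x ^ n := by
  rw [conv, sum_mul]
  apply sum_congr rfl
  intro kl h
  rw [← mem_antidiagonal.mp h, pow_add]
  ring

lemma Ent.conv {u v : ℕ → ℝ} (hu : Ent u) (hv : Ent v) : Ent (conv u v) := by
  intro x
  have := summable_norm_sum_mul_antidiagonal_of_summable_norm (hu x) (hv x)
  simpa only [conv_term] using this

lemma evS_mul {u v : ℕ → ℝ} (hu : Ent u) (hv : Ent v) (x : ℝ) :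
    evS u x * evS v x = evS (conv u v) x := by
  rw [evS, evS, tsum_mul_tsum_eq_tsum_sum_antidiagonal_of_summable_norm (hu x) (hv x)]
  simp only [conv_term]
  rfl

lemma evS_alt (u : ℕ → ℝ) (x : ℝ) : evS (altS u) x = evS u (-x) := by
  unfold evS altS
  congr 1
  ext n
  rw [neg_pow x]
  ring

lemma Ent.alt {u : ℕ → ℝ} (hu : Ent u) : Ent (altS u) := by
  intro x
  have := hu (-x)
  convert this using 2 with n
  unfold altS
  rw [neg_pow x]
  ring_nf

lemma shift_hasSum {u : ℕ → ℝ} (hu : Ent u) (M : ℕ) (x : ℝ) :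
    HasSum (fun n => shiftS M u n * x ^ n) (x ^ M * evS u x) := by
  have h1 : HasSum (fun n => u n * x ^ n) (evS u x) := (hu x).of_norm.hasSum
  have h2 := h1.mul_left (x ^ M)
  rw [← (add_left_injective M).hasSum_iff]
  · have : ((fun n => shiftS M u n * x ^ n) ∘ fun n => n + M)
        = fun n => x ^ M * (u n * x ^ n) := by
      funext n
      simp [shiftS, pow_add]
      ring
    rw [this]
    exact h2
  · intro n hn
    have : ¬ M ≤ n := fun h => hn ⟨n - M, by simp; omega⟩
    simp [shiftS, this]

lemma cf_ent (a b : ℝ) (hb : NonInt b) : Ent (cf a b) := by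
  intro x
  apply Summable.norm
  apply summable_of_ratio_norm_eventually_le (r := 1 / 2) (by norm_num)
  have hlim : Filter.Tendsto (fun n : ℕ => ((a - b) / (b + n) + 1) * (x / ((n : ℝ) + 1)))
      Filter.atTop (nhds ((0 + 1) * 0)) := by
    apply Filter.Tendsto.mul
    · apply Filter.Tendsto.add_const
      exact Filter.Tendsto.const_div_atTop
        (Filter.tendsto_atTop_add_const_left _ _ tendsto_natCast_atTop_atTop) _
    · exact Filter.Tendsto.const_div_atTop
        (Filter.tendsto_atTop_add_const_right _ _ tendsto_natCast_atTop_atTop) _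
  have h2 := hlim.norm
  simp only [mul_zero, norm_zero] at h2
  filter_upwards [h2.eventually_le_const (show (0 : ℝ) < 1 / 2 by norm_num)] with n hn
  have hbn : b + n ≠ 0 := fun hi => hb (-(n : ℤ)) (by push_cast; linarith)
  have hp := poch_ne_zero hb n
  have : cf a b (n + 1) * x ^ (n + 1)
      = ((a - b) / (b + n) + 1) * (x / ((n : ℝ) + 1)) * (cf a b n * x ^ n) := by
    unfold cf
    rw [poch_succ, poch_succ, Nat.factorial_succ, pow_succ]
    have : (n : ℝ) + 1 ≠ 0 := by positivity
    have : (n.factorial : ℝ) ≠ 0 := by positivity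
    push_cast
    field_simp
    ring
  rw [this, norm_mul]
  exact mul_le_mul_of_nonneg_right hn (norm_nonneg _)

lemma F11_eq (a b x : ℝ) : F11 a b x = evS (cf a b) x := by
  unfold F11 evS cf
  congr 1
  ext n
  ring

/-- coefficients of exp -/
noncomputable def ex (n : ℕ) : ℝ := 1 / n.factorial

lemma ex_ent : Ent ex := by
  intro x
  apply Summable.norm
  refine (Real.summable_pow_div_factorial x).congr (fun n => ?_)
  unfold ex
  ring

lemma evS_ex (x : ℝ) : evS ex x = Real.exp x := by
  rw [Real.exp_eq_exp_ℝ, NormedSpace.exp_eq_tsum_div]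
  unfold evS ex
  congr 1
  ext n
  ring

lemma kummer (a b x : ℝ) (hb : NonInt b) :
    F11 a b x = Real.exp x * F11 (b - a) b (-x) := by
  rw [F11_eq, F11_eq, ← evS_alt, ← evS_ex, mul_comm, evS_mul (cf_ent _ _ hb).alt ex_ent]
  congr 1
  ext n
  have hv := vander n (b - a) b
  rw [sub_sub_cancel] at hv
  unfold conv
  rw [Finset.Nat.sum_antidiagonal_eq_sum_range_succ_mk]
  unfold cf
  rw [← hv, sum_div]
  apply sum_congr rfl
  intro k hk
  have hk' : k ≤ n := by simpa [Nat.lt_succ_iff] using hk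
  have e := poch_add b k (n - k)
  rw [Nat.add_sub_cancel' hk'] at e
  have h1 := poch_ne_zero hb k
  have h2 := poch_ne_zero hb n
  have h3 : poch (b + k) (n - k) ≠ 0 := fun h => h2 (by rw [e, h, mul_zero])
  have hc : (n.factorial : ℝ) = n.choose k * k.factorial * (n - k).factorial := by
    exact_mod_cast (Nat.choose_mul_factorial_mul_factorial hk').symm
  have f1 : (k.factorial : ℝ) ≠ 0 := by positivity
  have f2 : ((n - k).factorial : ℝ) ≠ 0 := by positivity
  have f3 : (n.choose k : ℝ) ≠ 0 := by
    have := Nat.choose_pos hk'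
    positivity
  simp only [altS, ex]
  rw [hc, e]
  field_simp

/-- The product on the right. -/
lemma prod_kummer (a b c d x : ℝ) (hb : NonInt b) (hd : NonInt d) :
    F11 a b (-x) * F11 c d x = F11 (b - a) b x * F11 (d - c) d (-x) := by
  rw [kummer a b (-x) hb, kummer c d x hd, neg_neg]
  have : Real.exp (-x) * Real.exp x = 1 := by rw [← Real.exp_add]; simp
  linear_combination (F11 (b - a) b x * F11 (d - c) d (-x)) * this

lemma lagr (s t : Finset ℕ) (x y : ℕ → ℝ) (hx : Set.InjOn x s) (hy : Set.InjOn y t)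
    (hxy : ∀ i ∈ s, ∀ j ∈ t, x i ≠ y j) (p : Polynomial ℝ)
    (hp : p.natDegree + 2 ≤ #s + #t) :
    ∑ i ∈ s, p.eval (x i) / ((∏ k ∈ s.erase i, (x i - x k)) * ∏ j ∈ t, (x i - y j)) +
    ∑ j ∈ t, p.eval (y j) / ((∏ k ∈ s, (y j - x k)) * ∏ i ∈ t.erase j, (y j - y i)) = 0 := by
  classical
  have hinj : Set.InjOn (Sum.elim x y) (s.disjSum t : Finset (ℕ ⊕ ℕ)) := by
    rintro (i | i) hi (j | j) hj h
    · simp at hi hj h; rw [hx hi hj h]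
    · simp at hi hj h; exact absurd h (hxy _ hi _ hj)
    · simp at hi hj h; exact absurd h.symm (hxy _ hj _ hi)
    · simp at hi hj h; rw [hy hi hj h]
  have hdeg : p.degree < #(s.disjSum t) := by
    rw [card_disjSum]
    refine lt_of_le_of_lt p.degree_le_natDegree ?_
    exact_mod_cast (by omega)
  have h := Lagrange.coeff_eq_sum hinj hdeg
  rw [Polynomial.coeff_eq_zero_of_natDegree_lt (by rw [card_disjSum]; omega), sum_disjSum] at h
  rw [h]
  congr 1
  · apply sum_congr rfl
    intro i hi
    have : (s.disjSum t).erase (Sum.inl i) = (s.erase i).disjSum t := by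
      ext (k | k) <;> simp
    rw [this, prod_disjSum]
    simp
  · apply sum_congr rfl
    intro i hi
    have : (s.disjSum t).erase (Sum.inr i) = s.disjSum (t.erase i) := by
      ext (k | k) <;> simp
    rw [this, prod_disjSum]
    simp


lemma sign_sq (n : ℕ) : ((-1 : ℝ) ^ n) * (-1) ^ n = 1 := by rw [← mul_pow]; simp

lemma sign_ne (n : ℕ) : ((-1 : ℝ) ^ n) ≠ 0 := by simp

/-- Residue at the integer nodes. -/
lemma res_x (m₁ : ℤ) (M k l K : ℕ) (α γ : ℝ) (hα : NonInt α) (hγ : NonInt γ)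
    (hK : (K : ℤ) = k + m₁ + l) :
    poch (1 - α - k) K / ((∏ i ∈ (range (k + l + 1)).erase k, ((k : ℝ) - i)) *
        ∏ j ∈ range (k + l + M + 1), ((k : ℝ) - (1 - γ + j)))
      = (-1) ^ (k + l + M + 1) / (1 - γ) * (pochZ (1 - α) m₁ / poch (2 - γ) M *
        (cf α γ k * ((-1) ^ l * cf (1 - α + m₁) (2 - γ + M) l))) := by
  have hα1 : NonInt (1 - α) := by simpa using hα.int_sub 1
  have hγ1 : NonInt (1 - γ) := by simpa using hγ.int_sub 1
  have hγ2 : NonInt (2 - γ) := by simpa using hγ.int_sub 2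
  have hγM : NonInt (2 - γ + M) := by simpa using hγ2.add_int M
  have e1 := poch_split hα1 k l K m₁ hK
  have e2 : ∏ j ∈ range (k + l + M + 1), ((k : ℝ) - (1 - γ + j))
      = (-1) ^ (k + l + M + 1) * poch (1 - γ - k) (k + l + M + 1) := by
    rw [poch_eq_prod]
    have hc : ((-1 : ℝ)) ^ (k + l + M + 1) = ∏ _i ∈ range (k + l + M + 1), (-1 : ℝ) := by simp
    rw [hc, ← prod_mul_distrib]
    exact prod_congr rfl (fun j _ => by ring)
  have e3 := poch_split hγ1 k (l + M + 1) (k + l + M + 1) 0 (by push_cast; ring)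
  have e4 : poch (1 - γ + (0 : ℤ)) (l + M + 1)
      = (1 - γ) * (poch (2 - γ) M * poch (2 - γ + M) l) := by
    rw [poch_succ_left, ← poch_add, add_comm l M]
    push_cast
    ring_nf
  have e5 : pochZ (1 - γ) 0 = 1 := by simp [pochZ, poch_zero]
  rw [e1, e2, e3, e4, e5, prod_erase_range, sub_sub_cancel, sub_sub_cancel]
  unfold cf
  have n1 := poch_ne_zero hγ k
  have n2 := poch_ne_zero hγ2 M
  have n3 := poch_ne_zero hγM l
  have n4 : 1 - γ ≠ 0 := fun h => hγ 1 (by push_cast; linarith)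
  have f1 : (k.factorial : ℝ) ≠ 0 := by positivity
  have f2 : (l.factorial : ℝ) ≠ 0 := by positivity
  have s1 := sign_ne k
  have s2 := sign_ne l
  have s3 := sign_ne (k + l + M + 1)
  have q2 := sign_sq l
  have q3 := sign_sq (k + l + M + 1)
  generalize (-1 : ℝ) ^ (k + l + M + 1) = u at *
  generalize (-1 : ℝ) ^ k = v at *
  generalize (-1 : ℝ) ^ l = w at *
  have i1 : u⁻¹ = u := inv_eq_of_mul_eq_one_left q3
  have i2 : w⁻¹ = w := inv_eq_of_mul_eq_one_left q2
  nth_rewrite 2 [← i1]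
  nth_rewrite 2 [← i2]
  field_simp

lemma q_identity (M N : ℕ) (y : ℝ) :
    poch (1 + y) (M - (N + 1)) * poch (y + M - N) (N + 1)
      = poch (1 + y) M * ∏ k ∈ range (N + 1 - M), (y - (k : ℝ)) := by
  rcases le_or_gt (N + 1) M with h | h
  · obtain ⟨d, rfl⟩ := Nat.exists_eq_add_of_le h
    rw [show N + 1 + d - (N + 1) = d by omega, show N + 1 - (N + 1 + d) = 0 by omega,
      add_comm (N + 1) d, poch_add (1 + y) d (N + 1)]
    push_cast
    simp only [range_zero, prod_empty, mul_one]
    ring_nf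
  · obtain ⟨d, hd⟩ := Nat.exists_eq_add_of_le h.le
    rw [show M - (N + 1) = 0 by omega, show N + 1 - M = d by omega, hd, add_comm M d, poch_add]
    have hN : (N : ℝ) + 1 = M + d := by exact_mod_cast hd
    have e : ∏ k ∈ range d, (y - (k : ℝ)) = poch (1 - (-y) - d) d := by
      rw [poch_neg, poch_eq_prod]
      have hc : ((-1 : ℝ)) ^ d = ∏ _i ∈ range d, (-1 : ℝ) := by simp
      rw [hc, ← prod_mul_distrib]
      exact prod_congr rfl (fun j _ => by ring)
    rw [e, poch_zero, one_mul, show y + M - N = 1 - (-y) - d by linarith,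
      show 1 - (-y) - (d : ℝ) + d = 1 + y by ring]
    ring

/-- Residue at the shifted nodes. -/
lemma res_y (m₁ : ℤ) (M j l K : ℕ) (α γ : ℝ) (hγ : NonInt γ) (hγα : NonInt (γ - α))
    (hK : (K : ℤ) = j + (m₁ - M) + l) :
    poch (1 - α - (1 - γ + j)) K * poch (1 + (1 - γ + j)) (M - (j + l + 1)) /
      ((∏ i ∈ range (j + l + 1 - M), ((1 - γ + j : ℝ) - i)) *
        ∏ i ∈ (range (j + l + 1)).erase j, ((1 - γ + j : ℝ) - (1 - γ + i)))
      = (-1) ^ (j + l) / (1 - γ) * (poch (1 - γ) M * pochZ (γ - α) (m₁ - M) *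
        (cf (2 - γ - (1 - α)) (2 - γ) j * ((-1) ^ l * cf (γ - M - (α - m₁)) (γ - M) l))) := by
  have hγ1 : NonInt (1 - γ) := by simpa using hγ.int_sub 1
  have hγ2 : NonInt (2 - γ) := by simpa using hγ.int_sub 2
  have hγM : NonInt (γ - M) := by simpa using hγ.sub_int M
  have hγM1 : NonInt (1 - γ + M) := by simpa using hγ1.add_int M
  have hγj : NonInt (2 - γ + j) := by simpa using hγ2.add_int j
  have e1 := poch_split hγα j l K (m₁ - M) hK
  have e2 : ∏ i ∈ (range (j + l + 1)).erase j, ((1 - γ + j : ℝ) - (1 - γ + i))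
      = (-1) ^ l * j.factorial * l.factorial := by
    rw [← prod_erase_range]
    exact prod_congr rfl (fun i _ => by ring)
  have e3 := q_identity M (j + l) (1 - γ + j)
  rw [show 1 - γ + j + M - (j + l : ℕ) = 1 - γ + M - l by push_cast; ring] at e3
  have e4 := poch_split hγM1 l (j + 1) (j + l + 1) 0 (by push_cast; ring)
  have e5 : pochZ (1 - γ + M) 0 = 1 := by simp [pochZ, poch_zero]
  have e6 : poch (1 - γ) M * poch (1 - γ + M) (j + 1)
      = (1 - γ) * poch (2 - γ) j * poch (2 - γ + j) M := by
    rw [← poch_add, show M + (j + 1) = (j + M) + 1 by ring, poch_succ_left,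
      show 1 - γ + 1 = 2 - γ by ring, poch_add]
    ring
  rw [e4, e5, show 1 - (1 - γ + (M : ℝ)) = γ - M by ring, Int.cast_zero, add_zero,
    show 1 + (1 - γ + (j : ℝ)) = 2 - γ + j by ring] at e3
  rw [e2, show 1 - α - (1 - γ + j) = γ - α - j by ring, e1,
    show 1 + (1 - γ + (j : ℝ)) = 2 - γ + j by ring]
  have n0 : ∏ i ∈ range (j + l + 1 - M), ((1 - γ + j : ℝ) - i) ≠ 0 := by
    rw [prod_ne_zero_iff]
    intro i _ h
    exact hγ (1 + j - i) (by push_cast; linarith)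
  have n1 := poch_ne_zero hγ2 j
  have n2 := poch_ne_zero hγM l
  have n3 := poch_ne_zero hγM1 (j + 1)
  have n5 := poch_ne_zero hγj M
  have n4 : 1 - γ ≠ 0 := fun h => hγ 1 (by push_cast; linarith)
  have f1 : (j.factorial : ℝ) ≠ 0 := by positivity
  have f2 : (l.factorial : ℝ) ≠ 0 := by positivity
  unfold cf
  rw [show 1 - (γ - α) = 2 - γ - (1 - α) by ring,
    show γ - α + ((m₁ - M : ℤ) : ℝ) = γ - M - (α - m₁) by push_cast; ring, pow_add]
  have q1 := sign_sq j
  have q2 := sign_sq l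
  have s2 := sign_ne l
  generalize (-1 : ℝ) ^ j = v at *
  generalize (-1 : ℝ) ^ l = w at *
  generalize ∏ i ∈ range (j + l + 1 - M), ((1 - γ + j : ℝ) - i) = Q at *
  -- the quotient
  have key : poch (2 - γ + j) (M - (j + l + 1)) / Q
      = w * poch (1 - γ) M / (poch (γ - M) l * (1 - γ) * poch (2 - γ) j) := by
    rw [div_eq_div_iff n0 (by positivity)]
    apply mul_right_cancel₀ n5
    apply mul_right_cancel₀ n3
    linear_combination (w * poch (2 - γ + j) M * poch (2 - γ) j * (1 - γ)) * e3
      - (w * Q * poch (2 - γ + j) M) * e6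
      - (poch (2 - γ + j) (M - (j + l + 1)) * poch (γ - M) l * poch (1 - γ + M) (j + 1) *
        (1 - γ) * poch (2 - γ) j * poch (2 - γ + j) M) * q2
  rw [mul_comm _ (poch (2 - γ + j) (M - (j + l + 1))), mul_div_mul_comm, key]
  field_simp
  rw [pow_two, q2, one_mul]


lemma comp_natDegree (K : ℕ) (q : Polynomial ℝ) (hq : q.natDegree ≤ 1) :
    ((ascPochhammer ℝ K).comp q).natDegree ≤ K := by
  rw [Polynomial.natDegree_comp, ascPochhammer_natDegree]
  calc K * q.natDegree ≤ K * 1 := Nat.mul_le_mul_left _ hq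
    _ = K := mul_one K

lemma coef (m₁ : ℤ) (M N : ℕ) (α γ : ℝ) (hα : NonInt α) (hγ : NonInt γ)
    (hγα : NonInt (γ - α)) (h1 : m₁ ≤ N) (h2 : M - m₁ ≤ N) :
    pochZ (1 - α) m₁ / poch (2 - γ) M *
        shiftS M (conv (cf α γ) (altS (cf (1 - α + m₁) (2 - γ + M)))) N
      = poch (1 - γ) M * pochZ (γ - α) (m₁ - M) *
        conv (cf (2 - γ - (1 - α)) (2 - γ)) (altS (cf (γ - M - (α - m₁)) (γ - M))) N := by
  obtain ⟨K, hK⟩ : ∃ K : ℕ, (K : ℤ) = m₁ + N - M := ⟨(m₁ + N - M).toNat, by omega⟩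
  let p : Polynomial ℝ :=
    (ascPochhammer ℝ K).comp (Polynomial.C (1 - α) - Polynomial.X) *
      (ascPochhammer ℝ (M - (N + 1))).comp (Polynomial.C 1 + Polynomial.X)
  have hpe : ∀ z, p.eval z = poch (1 - α - z) K * poch (1 + z) (M - (N + 1)) := by
    intro z
    simp [p, poch, Polynomial.eval_comp]
  have hpd : p.natDegree ≤ K + (M - (N + 1)) := by
    refine Polynomial.natDegree_mul_le.trans (Nat.add_le_add ?_ ?_)
    · exact comp_natDegree _ _ (by compute_degree)
    · exact comp_natDegree _ _ (by compute_degree)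
  have L := lagr (range (N + 1 - M)) (range (N + 1)) (fun k => (k : ℝ)) (fun j => 1 - γ + j)
    (fun a _ b _ h => by simpa using h) (fun a _ b _ h => by simpa using h)
    (fun i _ j _ h => hγ (1 + j - i) (by push_cast; linarith)) p
    (by simp only [card_range]; omega)
  have n4 : 1 - γ ≠ 0 := fun h => hγ 1 (by push_cast; linarith)
  have hy : ∑ j ∈ range (N + 1), p.eval (1 - γ + j) /
      ((∏ k ∈ range (N + 1 - M), ((1 - γ + j : ℝ) - k)) *
        ∏ i ∈ (range (N + 1)).erase j, ((1 - γ + j : ℝ) - (1 - γ + i)))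
      = (-1) ^ N / (1 - γ) * (poch (1 - γ) M * pochZ (γ - α) (m₁ - M) *
        conv (cf (2 - γ - (1 - α)) (2 - γ)) (altS (cf (γ - M - (α - m₁)) (γ - M))) N) := by
    unfold conv
    rw [Finset.Nat.sum_antidiagonal_eq_sum_range_succ_mk, mul_sum, mul_sum]
    apply sum_congr rfl
    intro j hj
    obtain ⟨l, rfl⟩ : ∃ l, N = j + l :=
      Nat.exists_eq_add_of_le (by simpa [Nat.lt_succ_iff] using hj)
    rw [hpe, res_y m₁ M j l K α γ hγ hγα (by rw [hK]; push_cast; ring)]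
    simp only [altS, Nat.add_sub_cancel_left]
  have hx : ∑ k ∈ range (N + 1 - M), p.eval (k : ℝ) /
      ((∏ i ∈ (range (N + 1 - M)).erase k, ((k : ℝ) - i)) *
        ∏ j ∈ range (N + 1), ((k : ℝ) - (1 - γ + j)))
      = (-1) ^ (N + 1) / (1 - γ) * (pochZ (1 - α) m₁ / poch (2 - γ) M *
        shiftS M (conv (cf α γ) (altS (cf (1 - α + m₁) (2 - γ + M)))) N) := by
    unfold shiftS
    split_ifs with hMN
    · obtain ⟨n, rfl⟩ := Nat.exists_eq_add_of_le hMN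
      unfold conv
      rw [Finset.Nat.sum_antidiagonal_eq_sum_range_succ_mk, mul_sum, mul_sum,
        show M + n + 1 - M = n + 1 by omega, show M + n - M = n by omega]
      apply sum_congr rfl
      intro k hk
      obtain ⟨l, rfl⟩ : ∃ l, n = k + l :=
        Nat.exists_eq_add_of_le (by simpa [Nat.lt_succ_iff] using hk)
      rw [hpe, show M - (M + (k + l) + 1) = 0 by omega, poch_zero, mul_one,
        add_comm M (k + l),
        res_x m₁ M k l K α γ hα hγ (by rw [hK]; push_cast; ring)]
      simp only [altS, Nat.add_sub_cancel_left]
    · rw [show N + 1 - M = 0 by omega]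
      simp
  rw [hx, hy, pow_succ] at L
  have s := sign_ne N
  have hb : poch (2 - γ) M ≠ 0 := poch_ne_zero (by simpa using hγ.int_sub 2) M
  apply mul_left_cancel₀ (div_ne_zero s n4)
  linear_combination -L

lemma main_nat (m₁ : ℤ) (M : ℕ) (α γ : ℝ) (hα : NonInt α) (hγ : NonInt γ)
    (hγα : NonInt (γ - α)) :
    ∃ P : Polynomial ℝ, P.natDegree ≤ (max |m₁| |(M : ℤ) - m₁| - 1).toNat ∧
      ∀ t : ℝ,
        pochZ (1 - α) m₁ * t ^ M / poch (2 - γ) M *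
            F11 α γ t * F11 (1 - α + (m₁ : ℝ)) (2 - γ + (M : ℝ)) (-t) -
          poch (1 - γ) M * pochZ (γ - α) (m₁ - M) *
            F11 (1 - α) (2 - γ) (-t) * F11 (α - (m₁ : ℝ)) (γ - (M : ℝ)) t =
        P.eval t := by
  have hγ2 : NonInt (2 - γ) := by simpa using hγ.int_sub 2
  have hγM : NonInt (γ - M) := by simpa using hγ.sub_int M
  have hγM2 : NonInt (2 - γ + M) := by simpa using hγ2.add_int M
  set A := pochZ (1 - α) m₁ / poch (2 - γ) M with hA
  set B := poch (1 - γ) M * pochZ (γ - α) (m₁ - M) with hB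
  set u := conv (cf α γ) (altS (cf (1 - α + m₁) (2 - γ + M))) with hu
  set v := conv (cf (2 - γ - (1 - α)) (2 - γ)) (altS (cf (γ - M - (α - m₁)) (γ - M))) with hv
  have eu : Ent u := (cf_ent _ _ hγ).conv (cf_ent _ _ hγM2).alt
  have ev : Ent v := (cf_ent _ _ hγ2).conv (cf_ent _ _ hγM).alt
  set d : ℕ → ℝ := fun n => A * shiftS M u n - B * v n with hd
  obtain ⟨D, hD⟩ : ∃ D : ℕ, (D : ℤ) = max |m₁| |(M : ℤ) - m₁| :=
    ⟨(max |m₁| |(M : ℤ) - m₁|).toNat, Int.toNat_of_nonneg (le_max_of_le_left (abs_nonneg _))⟩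
  refine ⟨∑ i ∈ range D, Polynomial.C (d i) * Polynomial.X ^ i, ?_, ?_⟩
  · apply Polynomial.natDegree_sum_le_of_forall_le
    intro i hi
    refine (Polynomial.natDegree_C_mul_X_pow_le _ _).trans ?_
    have := mem_range.mp hi
    omega
  · intro t
    have h1 : HasSum (fun n => d n * t ^ n) (A * (t ^ M * evS u t) - B * evS v t) := by
      have a1 := (shift_hasSum eu M t).mul_left A
      have a2 := ((ev t).of_norm.hasSum).mul_left B
      have a3 := a1.sub a2
      have : (fun n => d n * t ^ n) =
          fun n => A * (shiftS M u n * t ^ n) - B * (v n * t ^ n) := by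
        funext n
        simp only [hd]
        ring
      rw [this]
      exact a3
    have h2 : HasSum (fun n => d n * t ^ n) (∑ i ∈ range D, d i * t ^ i) := by
      apply hasSum_sum_of_ne_finset_zero
      intro n hn
      have hn' : (D : ℤ) ≤ n := by simpa using hn
      rw [hD] at hn'
      have b1 := (le_abs_self m₁).trans ((le_max_left _ _).trans hn')
      have b2 := (le_abs_self ((M : ℤ) - m₁)).trans ((le_max_right _ _).trans hn')
      have := coef m₁ M n α γ hα hγ hγα b1 b2
      simp only [hd, hA, hB, hu, hv]
      rw [this]
      ring
    have h3 := h1.unique h2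
    have pu : F11 α γ t * F11 (1 - α + (m₁ : ℝ)) (2 - γ + (M : ℝ)) (-t) = evS u t := by
      rw [F11_eq, F11_eq, ← evS_alt, evS_mul (cf_ent _ _ hγ) (cf_ent _ _ hγM2).alt]
    have pv : F11 (1 - α) (2 - γ) (-t) * F11 (α - (m₁ : ℝ)) (γ - (M : ℝ)) t = evS v t := by
      rw [prod_kummer _ _ _ _ _ hγ2 hγM, F11_eq, F11_eq, ← evS_alt,
        evS_mul (cf_ent _ _ hγ2) (cf_ent _ _ hγM).alt]
    rw [Polynomial.eval_finsetSum]
    simp only [Polynomial.eval_mul, Polynomial.eval_C, Polynomial.eval_pow, Polynomial.eval_X]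
    rw [← h3, ← pu, ← pv, hA]
    ring

theorem Kummer_product_reduction (m₁ m₂ : ℤ) (hm : 0 < m₁ ^ 2 + m₂ ^ 2)
    (α γ : ℝ) (hα : ∀ k : ℤ, α ≠ (k : ℝ)) (hγ : ∀ k : ℤ, γ ≠ (k : ℝ))
    (hγα : ∀ k : ℤ, γ - α ≠ (k : ℝ)) :
    ∃ P : Polynomial ℝ, P.natDegree ≤ (max |m₁| |m₂ - m₁| - 1).toNat ∧
      ∀ t : ℝ,
        pochZ (1 - α) m₁ * t ^ (max 0 m₂).toNat / pochZ (2 - γ) m₂ *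
            F11 α γ t * F11 (1 - α + (m₁ : ℝ)) (2 - γ + (m₂ : ℝ)) (-t) -
          pochZ (1 - γ) m₂ * pochZ (γ - α) (m₁ - m₂) * t ^ (max 0 (-m₂)).toNat *
            F11 (1 - α) (2 - γ) (-t) * F11 (α - (m₁ : ℝ)) (γ - (m₂ : ℝ)) t =
        P.eval t := by

  have hα' : NonInt α := hα
  have hγ' : NonInt γ := hγ
  have hγα' : NonInt (γ - α) := hγα
  obtain ⟨M, rfl | rfl⟩ := m₂.eq_nat_or_neg
  · obtain ⟨P, hP, h⟩ := main_nat m₁ M α γ hα hγ hγα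
    refine ⟨P, hP, fun t => ?_⟩
    rw [← h t, pochZ_nat, pochZ_nat, show (max 0 (M : ℤ)).toNat = M by omega,
      show (max 0 (-(M : ℤ))).toNat = 0 by omega]
    simp
  · have hα1 : NonInt (1 - α) := by simpa using hα'.int_sub 1
    have hγ1 : NonInt (γ - 1) := by simpa using hγ'.sub_int 1
    have hγ2 : NonInt (2 - γ) := by simpa using hγ'.int_sub 2
    have hga : NonInt (2 - γ - (1 - α)) := by
      have := hγα'.int_sub 1
      rwa [show ((1 : ℤ) : ℝ) - (γ - α) = 2 - γ - (1 - α) by push_cast; ring] at this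
    obtain ⟨P, hP, h⟩ := main_nat (-m₁) M (1 - α) (2 - γ) hα1 hγ2 hga
    refine ⟨Polynomial.C (-(-1) ^ m₁ * pochZ (1 - α) m₁ * pochZ (γ - α) (m₁ + M)) *
      P.comp (-Polynomial.X), ?_, fun t => ?_⟩
    · refine (Polynomial.natDegree_C_mul_le _ _).trans ?_
      rw [Polynomial.natDegree_comp, Polynomial.natDegree_neg, Polynomial.natDegree_X, mul_one]
      rw [abs_neg, show (M : ℤ) - -m₁ = -(-(M : ℤ) - m₁) by ring, abs_neg] at hP
      exact hP
    · rw [Polynomial.eval_mul, Polynomial.eval_C, Polynomial.eval_comp, Polynomial.eval_neg,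
        Polynomial.eval_X, ← h (-t), pochZ_neg, pochZ_neg,
        show (max 0 (-(M : ℤ))).toNat = 0 by omega,
        show (max 0 (-(-(M : ℤ)))).toNat = M by omega]
      have r1 := pochZ_refl hα1 m₁
      have r2 := pochZ_refl hγα' (m₁ + M)
      rw [zpow_add₀ (by norm_num), zpow_natCast] at r2
      have r3 : ((-1 : ℝ) ^ m₁) * (-1) ^ m₁ = 1 := by
        rw [← mul_zpow]; simp
      have r4 := sign_sq M
      have n1 := poch_ne_zero hγ' M
      have n2 := poch_ne_zero hγ1 M
      have s4 := sign_ne M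
      push_cast
      have hs : pochZ (1 - α) m₁ * t ^ 0 / ((-1) ^ M / poch (γ - 1) M)
          = pochZ (1 - α) m₁ * poch (γ - 1) M * (-1) ^ M := by
        rw [pow_zero, mul_one, div_div_eq_mul_div, div_eq_iff s4, mul_assoc _ ((-1 : ℝ) ^ M), r4,
          mul_one]
      rw [show 1 - (1 - γ) = γ by ring, show 1 - (2 - γ) = γ - 1 by ring,
        show (2 : ℝ) - (2 - γ) = γ by ring, neg_neg t,
        show (2 - γ) - (1 - α) = 1 - (γ - α) by ring,
        show -m₁ - (M : ℤ) = -(m₁ + M) by ring,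
        show m₁ - -(M : ℤ) = m₁ + M by ring, hs, neg_pow t,
        show γ - -(M : ℝ) = γ + M by ring,
        show 2 - γ + -(M : ℝ) = 2 - γ - M by ring,
        show 1 - α - -(m₁ : ℝ) = 1 - α + m₁ by ring,
        show 1 - (1 - α) + -(m₁ : ℝ) = α - m₁ by ring]
      rw [sub_sub_cancel] at r1 ⊢
      generalize F11 α γ t = f1
      generalize F11 (1 - α + m₁) (2 - γ - M) (-t) = f2
      generalize F11 (1 - α) (2 - γ) (-t) = f3
      generalize F11 (α - m₁) (γ + M) t = f4
      generalize (-1 : ℝ) ^ m₁ = e at *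
      generalize (-1 : ℝ) ^ M = s at *
      linear_combination (-(pochZ (1 - α) m₁ * poch (γ - 1) M * f1 * f2 * e)) * r2
        - (pochZ (1 - α) m₁ * poch (γ - 1) M * s * f1 * f2) * r3
        + (e * pochZ (γ - α) (m₁ + M) * s / poch γ M * t ^ M * f3 * f4) * r1
        + (s * pochZ (γ - α) (m₁ + M) / poch γ M * t ^ M * f3 * f4) * r3
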